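/- arXiv:hep-th/9602163 — 3 statements merged into one kernel-verified Lean document; each statement's English description precedes it below -/
import Mathlib

section
/- Let k be a field of characteristic zero and V a k-vector space with an internal direct sum decomposition V = ⨁_{n∈ℕ} Vₙ into subspaces (each v ∈ V has components vₙ ∈ Vₙ, all but finitely many zero). Let d, δ : V → V be linear maps such that d ∘ d = 0, d(Vₙ) ⊆ Vₙ for all n, and (d ∘ δ + δ ∘ d) v = n • v for every v ∈ Vₙ and every n. If f ∈ V satisfies d f = 0, then f = f₀ + d g, where f₀ is the component of f in V₀ and g = δ(Σ_{n≥1} n⁻¹ • fₙ). -/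
/-- If `d` preserves each summand of an independent family, then each component of a
`d`-closed finite sum is `d`-closed. -/
theorem map_component_eq_zero_of_map_sum_eq_zero
    {R M ι : Type*} [Ring R] [AddCommGroup M] [Module R M]
    {p : ι → Submodule R M} (hp : iSupIndep p) (d : M →ₗ[R] M)
    (hd : ∀ i, ∀ v ∈ p i, d v ∈ p i) (F : ι →₀ M) (hF : ∀ i, F i ∈ p i)
    (h : d (F.sum fun _ v => v) = 0) (i : ι) : d (F i) = 0 := by
  by_cases hi : i ∈ F.support
  · rw [Finsupp.sum, map_sum] at h
    exact (iSupIndep_iff_finsetSum_eq_zero_imp_eq_zero p).1 hp F.support (fun j => d (F j))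
      (fun j _ => hd j _ (hF j)) h i hi
  · rw [Finsupp.notMem_support_iff.1 hi, map_zero]

/-- **Basic Lemma.** Let `V = ⨁ₙ Vₙ` be an ℕ-graded vector space over a
field of characteristic zero, `d` a grading-preserving differential with `d ∘ d = 0`, and
`δ` a linear map such that the anticommutator `d ∘ δ + δ ∘ d` acts on `Vₙ` as
multiplication by `n`.  Every `d`-closed element `f` with components `F n ∈ Vₙ`
(finitely many nonzero, `f = Σₙ F n`) equals its degree-zero component plus a `d`-exact
term: `f = F 0 + d (δ (Σ_{n≥1} n⁻¹ • F n))`.  (In a field `(0 : k)⁻¹ = 0`, so the sum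
`F.sum fun n v => (n : k)⁻¹ • v` is exactly the sum over `n ≥ 1`.) -/
theorem basic_lemma_closed_eq_zero_mode_add_exact
    {k V : Type*} [Field k] [CharZero k] [AddCommGroup V] [Module k V]
    (Vs : ℕ → Submodule k V) (hV : DirectSum.IsInternal Vs)
    (d δ : V →ₗ[k] V)
    (hd : d ∘ₗ d = 0)
    (hdV : ∀ n : ℕ, ∀ v ∈ Vs n, d v ∈ Vs n)
    (hΔ : ∀ n : ℕ, ∀ v ∈ Vs n, (d ∘ₗ δ + δ ∘ₗ d) v = (n : k) • v)
    (f : V) (F : ℕ →₀ V) (hF : ∀ n, F n ∈ Vs n)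
    (hf : f = F.sum fun _ v => v)
    (hclosed : d f = 0) :
    f = F 0 + d (δ (F.sum fun n v => (n : k)⁻¹ • v)) := by
  have hdF (n : ℕ) : d (F n) = 0 :=
    map_component_eq_zero_of_map_sum_eq_zero hV.submodule_iSupIndep d hdV F hF
      (hf ▸ hclosed) n
  have hdδ (n : ℕ) : d (δ (F n)) = (n : k) • F n := by
    simpa [hdF n] using hΔ n (F n) (hF n)
  have hsplit (n : ℕ) :
      F n = (if n = 0 then F n else 0) + (n : k)⁻¹ • (n : k) • F n := by
    rcases eq_or_ne n 0 with rfl | hn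
    · simp
    · rw [if_neg hn, zero_add, inv_smul_smul₀ (Nat.cast_ne_zero.2 hn)]
  have hzero : ∑ n ∈ F.support, (if n = 0 then F n else 0) = F 0 := by
    rw [Finset.sum_ite_eq']
    simp +contextual [eq_comm]
  simp only [hf, Finsupp.sum, map_sum, map_smul, hdδ]
  rw [← hzero, ← Finset.sum_add_distrib]
  exact Finset.sum_congr rfl fun n _ => hsplit n
end

section
/- Let K be a field, V a K-vector space, and d, b : V → V linear maps with d ∘ d = 0. Suppose d ∘ b + b ∘ d = c • id_V + P for some nonzero scalar c ∈ K and some linear map P : V → V. If ω ∈ V satisfies d ω = 0 and P^N ω = 0 for some natural number N, then ω is d-exact; explicitly ω = d ( b ( Σ_{j=0}^{N−1} (−1)^j c^{−(j+1)} • P^j ω ) ). -/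
/-- Let `d, b` be linear maps with `d ∘ d = 0` and anticommutator
`d ∘ b + b ∘ d = c • id + P` with `c ≠ 0`.  Every `d`-closed `ω` annihilated by some
power `P ^ N` is `d`-exact, explicitly
`ω = d (b (Σ_{j<N} (-1)^j c⁻¹^(j+1) • P^j ω))`. -/
theorem closed_is_exact_of_anticommutator_scalar_add_nilpotent
    {K V : Type*} [Field K] [AddCommGroup V] [Module K V]
    (d b : V →ₗ[K] V) (hd : d ∘ₗ d = 0)
    (c : K) (hc : c ≠ 0) (P : V →ₗ[K] V)
    (hdb : d ∘ₗ b + b ∘ₗ d = c • LinearMap.id + P)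
    (ω : V) (hω : d ω = 0) (N : ℕ) (hP : (P ^ N) ω = 0) :
    ω = d (b (∑ j ∈ Finset.range N, ((-1 : K) ^ j * (c⁻¹) ^ (j + 1)) • (P ^ j) ω)) := by
  have hdb' (x : V) : d (b x) + b (d x) = c • x + P x := by
    simpa using LinearMap.congr_fun hdb x
  have hdd (x : V) : d (d x) = 0 := LinearMap.congr_fun hd x
  have hclosed (j : ℕ) : d ((P ^ j) ω) = 0 := by
    induction j with
    | zero => simpa using hω
    | succ j ih =>
      have h := congrArg d (hdb' ((P ^ j) ω))
      rw [ih] at h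
      simpa [hdd, ih, pow_succ'] using h.symm
  have hstep (j : ℕ) : d (b ((P ^ j) ω)) = c • (P ^ j) ω + (P ^ (j + 1)) ω := by
    simpa [hclosed j, pow_succ'] using hdb' ((P ^ j) ω)
  have htelescope (n : ℕ) :
      d (b (∑ j ∈ Finset.range n, ((-1 : K) ^ j * (c⁻¹) ^ (j + 1)) • (P ^ j) ω)) =
        ω - ((-1 : K) ^ n * (c⁻¹) ^ n) • (P ^ n) ω := by
    induction n with
    | zero => simp
    | succ n ih =>
      have hcoeff : (-1 : K) ^ n * (c⁻¹) ^ (n + 1) * c = (-1 : K) ^ n * (c⁻¹) ^ n := by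
        rw [pow_succ, mul_assoc, mul_assoc, inv_mul_cancel₀ hc, mul_one]
      rw [Finset.sum_range_succ, map_add, map_add, ih, map_smul, map_smul, hstep, smul_add,
        smul_smul, hcoeff, pow_succ (-1 : K) n]
      module
  rw [htelescope, hP, smul_zero, sub_zero]
end

section
/- Let k be a field, L a Lie algebra over k, and V a k-vector space which is an L-module with action ρ(x) v = x • v. Let s : V → V be a linear map with s ∘ s = 0, and suppose that for every x ∈ L there is a linear map h_x : V → V such that ρ(x) = s ∘ h_x + h_x ∘ s. (Then each ρ(x) commutes with s, so Z = ker s is an L-submodule.) Assume that Z = ker s is a semisimple L-module (a sum of irreducible Lie submodules). Then every ω ∈ V with s ω = 0 can be written as ω = ω_inv + s η for some η ∈ V and some ω_inv ∈ V with ρ(x) ω_inv = 0 for all x ∈ L. -/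
/-- Let `s` be a nilpotent differential on an `L`-module `V` such that
the action of every `x ∈ L` is chain homotopic to zero (`ρ(x) = s ∘ hₓ + hₓ ∘ s`), so that
`Z = ker s` is an `L`-submodule.  If `Z` is a semisimple `L`-module (every Lie submodule of
`Z` has a complement), then every `s`-closed `ω` can be written as an `L`-invariant element
plus an `s`-exact one: `ω = ω_inv + s η` with `⁅x, ω_inv⁆ = 0` for all `x`. -/
theorem closed_eq_invariant_add_exact_of_semisimple_kernel
    {k L V : Type*} [Field k] [LieRing L] [LieAlgebra k L]
    [AddCommGroup V] [Module k V] [LieRingModule L V] [LieModule k L V]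
    (s : V →ₗ[k] V) (hs : s ∘ₗ s = 0)
    (hhomotopy : ∀ x : L, ∃ hx : V →ₗ[k] V, ∀ v : V, ⁅x, v⁆ = s (hx v) + hx (s v))
    (Z : LieSubmodule k L V) (hZ : (Z : Submodule k V) = LinearMap.ker s)
    (hss : ComplementedLattice (LieSubmodule k L Z))
    (ω : V) (hω : s ω = 0) :
    ∃ ωinv η : V, (∀ x : L, ⁅x, ωinv⁆ = 0) ∧ ω = ωinv + s η := by
  have hker : ∀ z : Z, s z = 0 := fun z => by
    have hz : (z : V) ∈ (Z : Submodule k V) := z.2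
    rwa [hZ] at hz
  have hexact : ∀ (x : L) (z : Z), ∃ η, s η = ((⁅x, z⁆ : Z) : V) := fun x z => by
    obtain ⟨hx, h⟩ := hhomotopy x
    exact ⟨hx z, by rw [LieSubmodule.coe_bracket, h, hker, map_zero, add_zero]⟩
  let B : LieSubmodule k L Z :=
    { (LinearMap.range s).comap (Z : Submodule k V).subtype with
      lie_mem := fun {x z} _ => hexact x z }
  obtain ⟨C, hC⟩ := exists_isCompl B
  have hωZ : ω ∈ Z := by
    have h : ω ∈ (Z : Submodule k V) := by rwa [hZ]
    exact h
  have hmem : (⟨ω, hωZ⟩ : Z) ∈ B ⊔ C := hC.sup_eq_top ▸ LieSubmodule.mem_top _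
  obtain ⟨b, ⟨η, hη⟩, c, hc, hbc⟩ := (LieSubmodule.mem_sup B C _).mp hmem
  refine ⟨c, η, fun x => ?_, ?_⟩
  · have h : ⁅x, c⁆ ∈ B ⊓ C :=
      (LieSubmodule.mem_inf B C _).mpr ⟨hexact x c, C.lie_mem hc⟩
    rw [hC.inf_eq_bot, LieSubmodule.mem_bot] at h
    simpa using congrArg Subtype.val h
  · have h : (b : V) + c = ω := congrArg Subtype.val hbc
    rw [hη, add_comm]
    exact h.symm
end
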